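/- For every f ∈ C(E) and every x ∈ E∖E₀, the time average (1/T)∫₀^T f(X_t) dt converges to π(f) in P_x-probability as T → ∞; moreover, the convergence is uniform with respect to x in any compact subset of E∖E₀. -/

import Mathlib

open MeasureTheory ProbabilityTheory Filter Topology Set ENNReal

noncomputable section

/-- The data of transition rates `c(x,dy) = r(x) p(x,y) λ(dy)` on a state space `E`,
satisfying Assumption 1.1 (i)-(iii): `r` is continuous and nonnegative, `λ` is a probability
measure which is strictly positive on open sets, `p` is a strictly positive continuous
transition density, and `1/r` is `λ`-integrable. -/
structure ChainSetting (E : Type*) [MeasurableSpace E] [TopologicalSpace E] where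
  r : E → ℝ
  r_cont : Continuous r
  r_nonneg : ∀ x, 0 ≤ r x
  lam : Measure E
  lam_prob : IsProbabilityMeasure lam
  lam_pos : ∀ U : Set E, IsOpen U → U.Nonempty → 0 < lam U
  p : E → E → ℝ
  p_cont : Continuous fun z : E × E => p z.1 z.2
  p_pos : ∀ x y, 0 < p x y
  p_int : ∀ x, ∫ y, p x y ∂lam = 1
  inv_r_int : ∫⁻ x, (ENNReal.ofReal (r x))⁻¹ ∂lam ≠ ∞

namespace ChainSetting

variable {E : Type*} [MeasurableSpace E] [TopologicalSpace E] (S : ChainSetting E)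

/-- The (closed) set `E₀ = {x : r(x) = 0}` of absorbing states. -/
def E0 : Set E := {x | S.r x = 0}

/-- The skeleton transition probability `p(x,dy) = p(x,y) λ(dy)`. -/
def skel (x : E) : Measure E := S.lam.withDensity fun y => ENNReal.ofReal (S.p x y)

/-- The jump rates `c(x,dy) = r(x) p(x,y) λ(dy)`. -/
def cMeas (x : E) : Measure E := S.lam.withDensity fun y => ENNReal.ofReal (S.r x * S.p x y)

/-- The measure `μ(dx) c(x,dy)` on `E × E`. -/
def muc (μ : Measure E) : Measure (E × E) :=
  (μ.prod S.lam).withDensity fun z => ENNReal.ofReal (S.r z.1 * S.p z.1 z.2)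

/-- The invariant probability `π(dx) = π₀(1/r)⁻¹ π₀(dx)/r(x)` of the continuous-time chain,
built from the invariant probability `π₀` of the skeleton, cf. (1.2). -/
def piMeas (π₀ : Measure E) : Measure E :=
  (∫⁻ x, (ENNReal.ofReal (S.r x))⁻¹ ∂π₀)⁻¹ •
    π₀.withDensity fun x => (ENNReal.ofReal (S.r x))⁻¹

/-- Assumption 1.1 (iv): with `A_δ = {r < δ}`, there is a sequence `δ_n → 0` with
`λ(A_{2δ_n}) ≤ C λ(A_{2δ_n} \ A_{δ_n})`. -/
def CondIV : Prop :=
  ∃ δ : ℕ → ℝ, (∀ n, 0 < δ n) ∧ Tendsto δ atTop (𝓝 0) ∧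
    ∃ C : ℝ≥0∞, C ≠ ∞ ∧ ∀ n,
      S.lam {x | S.r x < 2 * δ n} ≤ C * S.lam ({x | S.r x < 2 * δ n} \ {x | S.r x < δ n})

end ChainSetting

/-- Trajectories of the jump process: the skeleton chain `ω.1` together with the holding
times `ω.2` (with value `∞` allowed, corresponding to absorption). -/
abbrev Traj (E : Type*) := (ℕ → E) × (ℕ → ℝ≥0∞)

namespace Traj

variable {E : Type*}

/-- The jump times `T_n = τ_0 + ⋯ + τ_{n-1}`. -/
def jumpTime (n : ℕ) (ω : Traj E) : ℝ≥0∞ := ∑ i ∈ Finset.range n, ω.2 i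

/-- The position at time `t`: `X_t = Z_n` for `T_n ≤ t < T_{n+1}`. -/
def pos (t : ℝ) (ω : Traj E) : E := ω.1 (sInf {n | ENNReal.ofReal t < jumpTime (n + 1) ω})

end Traj

/-- The exponential law of parameter `ρ`, as a measure on `ℝ≥0∞`; for `ρ ≤ 0` it is the Dirac
mass at `∞` (infinite holding time at an absorbing state). -/
def expMeasE (ρ : ℝ) : Measure ℝ≥0∞ :=
  if 0 < ρ then
    Measure.map ENNReal.ofReal
      (MeasureTheory.volume.withDensity fun s =>
        Set.indicator (Set.Ioi (0 : ℝ)) (fun s => ENNReal.ofReal (ρ * Real.exp (-(ρ * s)))) s)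
  else Measure.dirac ∞

/-- `P` is the law of the continuous-time Markov chain with holding rates `ρ` and skeleton
transition kernel `κ`, started at `x`: the skeleton `ω.1` is a Markov chain with kernel `κ`
started at `x`, and conditionally on the skeleton the holding times `ω.2 i` are independent
exponential random variables of parameters `ρ(Z_i)`. -/
structure IsChainLaw {E : Type*} [MeasurableSpace E]
    (ρ : E → ℝ) (κ : E → Measure E) (x : E) (P : Measure (Traj E)) : Prop where
  prob : IsProbabilityMeasure P
  init : P.map (fun ω => ω.1 0) = Measure.dirac x
  markov : ∀ (n : ℕ) (f : (Fin (n + 1) → E) → ℝ≥0∞) (g : E → ℝ≥0∞),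
    Measurable f → Measurable g →
    ∫⁻ ω, f (fun i => ω.1 i) * g (ω.1 (n + 1)) ∂P
      = ∫⁻ ω, f (fun i => ω.1 i) * ∫⁻ y, g y ∂κ (ω.1 n) ∂P
  holding : ∀ (n : ℕ) (f : (ℕ → E) → ℝ≥0∞) (g : Fin n → ℝ≥0∞ → ℝ≥0∞),
    Measurable f → (∀ i, Measurable (g i)) →
    ∫⁻ ω, f ω.1 * ∏ i : Fin n, g i (ω.2 i) ∂P
      = ∫⁻ ω, f ω.1 * ∏ i : Fin n, ∫⁻ s, g i s ∂expMeasE (ρ (ω.1 i)) ∂P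

/-- The empirical measure `μ_T` of (2.2), as a measure on `E`. -/
def empMeas {E : Type*} [MeasurableSpace E] (T : ℝ) (ω : Traj E) : Measure E :=
  (ENNReal.ofReal T)⁻¹ •
    Measure.map (fun t => Traj.pos t ω) (MeasureTheory.volume.restrict (Set.Ioc 0 T))

open Classical in
/-- The empirical flow `Q_T`, as a measure on `E × E`: `(1/T)` times the sum of the Dirac
masses at the jumps `(X_{t⁻}, X_t)` occurring at times `t ∈ [0,T]`. -/
def empFlow {E : Type*} [MeasurableSpace E] (T : ℝ) (ω : Traj E) : Measure (E × E) :=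
  (ENNReal.ofReal T)⁻¹ • Measure.sum fun n : ℕ =>
    if Traj.jumpTime (n + 1) ω ≤ ENNReal.ofReal T ∧ ω.1 n ≠ ω.1 (n + 1)
    then Measure.dirac (ω.1 n, ω.1 (n + 1)) else 0

open Classical in
/-- Bundle a measure as a probability measure (junk value if it is not one). -/
def toPM {α : Type*} [MeasurableSpace α] [Nonempty α] (μ : Measure α) : ProbabilityMeasure α :=
  if h : IsProbabilityMeasure μ then ⟨μ, h⟩
  else ⟨Measure.dirac (Classical.arbitrary α), by infer_instance⟩

open Classical in
/-- Bundle a measure as a finite measure (junk value if it is not one). -/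
def toFM {α : Type*} [MeasurableSpace α] (μ : Measure α) : FiniteMeasure α :=
  if h : IsFiniteMeasure μ then ⟨μ, h⟩ else 0

/-- The pair empirical measure–empirical flow `(μ_T, Q_T)`, as a random element of
`M₁(E) × M₊(E×E)`. -/
def empPair {E : Type*} [MeasurableSpace E] [Nonempty E] (T : ℝ) (ω : Traj E) :
    ProbabilityMeasure E × FiniteMeasure (E × E) :=
  (toPM (empMeas T ω), toFM (empFlow T ω))

variable {E : Type*} [MeasurableSpace E] [TopologicalSpace E] [PolishSpace E]
  [CompactSpace E] [BorelSpace E] [Nonempty E]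

set_option linter.unusedSectionVars false
set_option linter.unusedVariables false

/-! ### Deterministic part -/

lemma jumpTime_mono' {E : Type*} (ω : Traj E) : Monotone fun n => Traj.jumpTime n ω := by
  refine monotone_nat_of_le_succ fun n => ?_
  simp only [Traj.jumpTime, Finset.sum_range_succ]
  exact le_self_add

lemma measurable_idx {E : Type*} (ω : Traj E) :
    Measurable fun t : ℝ => sInf {n | ENNReal.ofReal t < Traj.jumpTime (n + 1) ω} := by
  have hG : ∀ n, MeasurableSet {t : ℝ | ENNReal.ofReal t < Traj.jumpTime (n + 1) ω} := fun n =>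
    measurableSet_lt ENNReal.measurable_ofReal measurable_const
  refine measurable_to_countable' fun k => ?_
  have : (fun t : ℝ => sInf {n | ENNReal.ofReal t < Traj.jumpTime (n + 1) ω}) ⁻¹' {k}
      = ({t : ℝ | ENNReal.ofReal t < Traj.jumpTime (k + 1) ω} \
          ⋃ j, ⋃ (_ : j < k), {t : ℝ | ENNReal.ofReal t < Traj.jumpTime (j + 1) ω}) ∪
        ((⋃ j, {t : ℝ | ENNReal.ofReal t < Traj.jumpTime (j + 1) ω})ᶜ ∩ {_t : ℝ | k = 0}) := by
    ext t
    simp only [mem_preimage, mem_singleton_iff, mem_union, Set.mem_sdiff, mem_ofPred_eq, mem_iUnion,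
      mem_inter_iff, mem_compl_iff, not_exists]
    by_cases h : ∃ n, ENNReal.ofReal t < Traj.jumpTime (n + 1) ω
    · have hne : {n | ENNReal.ofReal t < Traj.jumpTime (n + 1) ω}.Nonempty := h
      constructor
      · intro hk
        left
        subst hk
        exact ⟨Nat.sInf_mem hne, fun j hj hlt => Nat.notMem_of_lt_sInf hj hlt⟩
      · rintro (⟨h1, h2⟩ | ⟨h1, h2⟩)
        · refine le_antisymm (Nat.sInf_le h1) ?_
          by_contra hlt
          exact h2 _ (not_le.mp hlt) (Nat.sInf_mem hne)
        · obtain ⟨n, hn⟩ := h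
          exact absurd hn (h1 n)
    · have he : {n | ENNReal.ofReal t < Traj.jumpTime (n + 1) ω} = ∅ := by
        ext n; simpa using not_exists.mp h n
      rw [he]
      have h' := not_exists.mp h
      simp only [Nat.sInf_empty]
      constructor
      · intro hk; exact Or.inr ⟨h', hk.symm⟩
      · rintro (⟨h1, h2⟩ | ⟨h1, h2⟩)
        · exact absurd h1 (h' k)
        · exact h2.symm
  rw [this]
  refine ((hG k).diff (MeasurableSet.iUnion fun j => MeasurableSet.iUnion fun _ => hG j)).union
    ((MeasurableSet.iUnion hG).compl.inter (MeasurableSet.const _))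

lemma det_lemma {E : Type*} (ω : Traj E) (f : E → ℝ) (B : ℝ) (hB : ∀ x, |f x| ≤ B)
    (n : ℕ) (hn : ∀ i < n, ω.2 i ≠ ∞) (T : ℝ) (hT : 0 ≤ T) :
    |(∫ t in Set.Ioc (0 : ℝ) T, f (Traj.pos t ω)) - ∑ i ∈ Finset.range n, f (ω.1 i) * (ω.2 i).toReal|
      ≤ B * |T - ∑ i ∈ Finset.range n, (ω.2 i).toReal| := by
  have hmeas : Measurable fun t : ℝ => f (Traj.pos t ω) :=
    (measurable_from_top (f := fun k : ℕ => f (ω.1 k))).comp (measurable_idx ω)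
  have hint : ∀ a b : ℝ, IntervalIntegrable (fun t : ℝ => f (Traj.pos t ω)) volume a b := by
    intro a b
    refine (intervalIntegrable_const (c := B)).mono_fun' hmeas.aestronglyMeasurable ?_
    exact ae_of_all _ fun t => by simpa using hB _
  set s : ℕ → ℝ := fun k => ∑ i ∈ Finset.range k, (ω.2 i).toReal with hs
  have hsT : ∀ k ≤ n, Traj.jumpTime k ω = ENNReal.ofReal (s k) := by
    intro k hk
    rw [hs, ENNReal.ofReal_sum_of_nonneg (fun _ _ => ENNReal.toReal_nonneg), Traj.jumpTime]
    refine Finset.sum_congr rfl fun i hi => ?_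
    rw [ENNReal.ofReal_toReal (hn i ((Finset.mem_range.mp hi).trans_le hk))]
  have hs0 : ∀ k, 0 ≤ s k := fun k => Finset.sum_nonneg fun _ _ => ENNReal.toReal_nonneg
  have hss : ∀ k, s (k+1) = s k + (ω.2 k).toReal := fun k => Finset.sum_range_succ _ _
  have hsum : ∫ t in (0:ℝ)..(s n), f (Traj.pos t ω)
      = ∑ i ∈ Finset.range n, f (ω.1 i) * (ω.2 i).toReal := by
    have h0 : (0:ℝ) = s 0 := by simp [hs]
    rw [h0, ← intervalIntegral.sum_integral_adjacent_intervals (fun k _ => hint _ _)]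
    refine Finset.sum_congr rfl fun k hk => ?_
    have hk := Finset.mem_range.mp hk
    have hle : s k ≤ s (k+1) := by rw [hss]; linarith [ENNReal.toReal_nonneg (a := ω.2 k)]
    have : ∫ t in (s k)..(s (k+1)), f (Traj.pos t ω) = ∫ t in (s k)..(s (k+1)), f (ω.1 k) := by
      rw [intervalIntegral.integral_of_le hle, intervalIntegral.integral_of_le hle,
        ← integral_Ico_eq_integral_Ioc, ← integral_Ico_eq_integral_Ioc]
      refine setIntegral_congr_fun measurableSet_Ico fun t ht => ?_
      have ht0 : 0 ≤ t := (hs0 k).trans ht.1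
      have hmem : ENNReal.ofReal t < Traj.jumpTime (k + 1) ω := by
        rw [hsT _ hk]
        exact (ENNReal.ofReal_lt_ofReal_iff (ht0.trans_lt ht.2)).2 ht.2
      have : sInf {n | ENNReal.ofReal t < Traj.jumpTime (n + 1) ω} = k := by
        refine le_antisymm (Nat.sInf_le hmem) ?_
        refine le_csInf ⟨k, hmem⟩ fun j hj => ?_
        by_contra hlt
        have h1 : Traj.jumpTime (j+1) ω ≤ Traj.jumpTime k ω := jumpTime_mono' ω (by omega)
        rw [hsT k hk.le] at h1
        exact absurd (lt_of_lt_of_le hj h1) (not_lt.mpr (ENNReal.ofReal_le_ofReal ht.1))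
      simp only [Traj.pos, this]
    rw [this, intervalIntegral.integral_const, hss]
    simp [mul_comm]
  rw [← hsum, ← intervalIntegral.integral_of_le hT,
    intervalIntegral.integral_interval_sub_left (hint _ _) (hint _ _)]
  have := intervalIntegral.norm_integral_le_of_norm_le_const (a := s n) (b := T) (C := B)
    (f := fun t : ℝ => f (Traj.pos t ω)) (fun t _ => by simpa using hB _)
  simpa using this

/-! ### abstract second moment -/

lemma second_moment {Ω : Type*} [MeasurableSpace Ω] (μ : Measure Ω) [IsProbabilityMeasure μ]
    (Y : ℕ → Ω → ℝ) (hY : ∀ i, Measurable (Y i)) (B : ℝ) (hB : ∀ i ω, |Y i ω| ≤ B)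
    (D ρ : ℝ) (hD : 0 ≤ D) (hρ0 : 0 ≤ ρ) (hρ1 : ρ < 1)
    (hcov : ∀ i k, |∫ ω, Y i ω * Y (i + k) ω ∂μ| ≤ D * ρ ^ k) (n : ℕ) :
    ∫ ω, (∑ i ∈ Finset.range n, Y i ω) ^ 2 ∂μ ≤ n * (2 * D / (1 - ρ)) := by
  have hint : ∀ i j, Integrable (fun ω => Y i ω * Y j ω) μ := by
    intro i j
    refine Integrable.of_bound ((hY i).mul (hY j)).aestronglyMeasurable (B * B)
      (ae_of_all _ fun ω => ?_)
    rw [Real.norm_eq_abs, abs_mul]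
    exact mul_le_mul (hB i ω) (hB j ω) (abs_nonneg _) ((abs_nonneg _).trans (hB i ω))
  have hgeom : ∀ n, ∑ k ∈ Finset.range n, D * ρ ^ k ≤ D / (1 - ρ) := by
    intro n
    rw [← Finset.mul_sum, div_eq_mul_inv]
    refine mul_le_mul_of_nonneg_left ?_ hD
    rw [← tsum_geometric_of_lt_one hρ0 hρ1]
    exact (summable_geometric_of_lt_one hρ0 hρ1).sum_le_tsum _ (fun _ _ => pow_nonneg hρ0 _)
  have hsq : ∀ n, Integrable (fun ω => (∑ i ∈ Finset.range n, Y i ω) ^ 2) μ := by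
    intro n
    simp_rw [sq, Finset.sum_mul_sum]
    exact integrable_finsetSum _ fun i _ => integrable_finsetSum _ fun j _ => hint i j
  induction n with
  | zero => simp
  | succ n ih =>
    have e : ∀ ω, (∑ i ∈ Finset.range (n+1), Y i ω) ^ 2 = (∑ i ∈ Finset.range n, Y i ω) ^ 2
        + (2 * (∑ i ∈ Finset.range n, Y i ω * Y n ω) + Y n ω * Y n ω) := by
      intro ω
      rw [Finset.sum_range_succ, ← Finset.sum_mul]; ring
    simp_rw [e]
    have hi1 : Integrable (fun ω => ∑ i ∈ Finset.range n, Y i ω * Y n ω) μ :=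
      integrable_finsetSum _ fun i _ => hint i n
    have hadd : Integrable (fun ω => 2 * (∑ i ∈ Finset.range n, Y i ω * Y n ω) + Y n ω * Y n ω) μ :=
      (hi1.const_mul 2).add (hint n n)
    rw [integral_add (hsq n) hadd,
      integral_add (hi1.const_mul 2) (hint n n), integral_const_mul,
      integral_finsetSum _ fun i _ => hint i n]
    have h1 : ∑ i ∈ Finset.range n, ∫ ω, Y i ω * Y n ω ∂μ + ∫ ω, Y n ω * Y n ω ∂μ
        ≤ D / (1 - ρ) := by
      rw [← Finset.sum_range_succ (fun i => ∫ ω, Y i ω * Y n ω ∂μ)]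
      refine le_trans ?_ (hgeom (n+1))
      rw [← Finset.sum_range_reflect (fun k => D * ρ ^ k)]
      refine Finset.sum_le_sum fun i hi => ?_
      have hi := Finset.mem_range.mp hi
      have := (le_abs_self _).trans (hcov i (n - i))
      rw [show i + (n - i) = n by omega] at this
      simpa using this
    have h2 : ∑ i ∈ Finset.range n, ∫ ω, Y i ω * Y n ω ∂μ ≤ D / (1 - ρ) := by
      refine le_trans ?_ (hgeom (n+1))
      rw [Finset.sum_range_succ', ← Finset.sum_range_reflect]
      have : 0 ≤ D * ρ ^ 0 := by positivity
      refine le_trans (Finset.sum_le_sum fun i hi => ?_) (le_add_of_nonneg_right this)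
      have hi := Finset.mem_range.mp hi
      have := (le_abs_self _).trans (hcov (n - 1 - i) (i + 1))
      rw [show n - 1 - i + (i + 1) = n by omega] at this
      exact this
    push_cast
    have : 2 * D / (1 - ρ) = 2 * (D / (1 - ρ)) := by ring
    rw [this] at ih ⊢
    linarith

/-! ### exponential law -/

lemma lintegral_expMeasE {ρ : ℝ} (hρ : 0 < ρ) {φ : ℝ≥0∞ → ℝ≥0∞} (hφ : Measurable φ) :
    ∫⁻ s, φ s ∂expMeasE ρ
      = ∫⁻ s in Set.Ioi (0 : ℝ), ENNReal.ofReal (ρ * Real.exp (-(ρ * s))) * φ (ENNReal.ofReal s) := by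
  rw [expMeasE, if_pos hρ, lintegral_map hφ ENNReal.measurable_ofReal,
    withDensity_indicator measurableSet_Ioi,
    lintegral_withDensity_eq_lintegral_mul _ (by fun_prop) (by fun_prop)]
  rfl

lemma gammaAux (ρ : ℝ) (hρ : 0 < ρ) (a : ℝ) (ha : 0 < a) :
    ∫⁻ s in Set.Ioi (0:ℝ), ENNReal.ofReal (s ^ (a - 1) * Real.exp (-(ρ * s)))
      = ENNReal.ofReal ((1 / ρ) ^ a * Real.Gamma a) := by
  have h := Real.integral_rpow_mul_exp_neg_mul_Ioi ha hρ
  have hi : Integrable (fun t : ℝ => t ^ (a - 1) * Real.exp (-(ρ * t)))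
      (volume.restrict (Set.Ioi (0:ℝ))) := by
    by_contra hc
    rw [integral_undef hc] at h
    have : 0 < (1 / ρ) ^ a * Real.Gamma a :=
      mul_pos (Real.rpow_pos_of_pos (by positivity) _) (Real.Gamma_pos_of_pos ha)
    exact absurd h this.ne
  rw [← h, ofReal_integral_eq_lintegral_ofReal hi]
  filter_upwards [ae_restrict_mem measurableSet_Ioi] with t ht
  exact mul_nonneg (Real.rpow_nonneg (le_of_lt ht) _) (Real.exp_pos _).le

lemma expMeasE_one (ρ : ℝ) : ∫⁻ _s, 1 ∂expMeasE ρ = 1 := by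
  by_cases hρ : 0 < ρ
  · rw [lintegral_expMeasE hρ measurable_const]
    have h := gammaAux ρ hρ 1 one_pos
    simp only [sub_self, Real.rpow_zero, one_mul, Real.rpow_one, Real.Gamma_one, mul_one] at h
    simp only [mul_one, ENNReal.ofReal_mul hρ.le]
    rw [lintegral_const_mul _ (by fun_prop), h, ← ENNReal.ofReal_mul hρ.le]
    simp [hρ.ne']
  · rw [expMeasE, if_neg hρ]; simp

lemma expMeasE_mean (ρ : ℝ) : ∫⁻ s, s ∂expMeasE ρ = (ENNReal.ofReal ρ)⁻¹ := by
  by_cases hρ : 0 < ρ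
  · rw [lintegral_expMeasE hρ measurable_id']
    have h := gammaAux ρ hρ 2 two_pos
    norm_num at h
    have e : ∀ s ∈ Set.Ioi (0:ℝ), ENNReal.ofReal (ρ * Real.exp (-(ρ * s))) * ENNReal.ofReal s
        = ENNReal.ofReal ρ * ENNReal.ofReal (s * Real.exp (-(ρ * s))) := by
      intro s hs
      rw [← ENNReal.ofReal_mul (by positivity), ← ENNReal.ofReal_mul hρ.le]
      ring_nf
    rw [setLIntegral_congr_fun measurableSet_Ioi e, lintegral_const_mul _ (by fun_prop), h,
      ← ENNReal.ofReal_mul hρ.le, ← ENNReal.ofReal_inv_of_pos hρ]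
    congr 1
    field_simp
  · rw [expMeasE, if_neg hρ, ENNReal.ofReal_of_nonpos (not_lt.mp hρ)]; simp

lemma measurable_expMeasE {φ : ℝ≥0∞ → ℝ≥0∞} (hφ : Measurable φ) :
    Measurable fun ρ : ℝ => ∫⁻ s, φ s ∂expMeasE ρ := by
  have : (fun ρ : ℝ => ∫⁻ s, φ s ∂expMeasE ρ) = fun ρ => if 0 < ρ then
      ∫⁻ s in Set.Ioi (0 : ℝ), ENNReal.ofReal (ρ * Real.exp (-(ρ * s))) * φ (ENNReal.ofReal s)
      else φ ∞ := by
    ext ρ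
    split_ifs with h
    · exact lintegral_expMeasE h hφ
    · rw [expMeasE, if_neg h, lintegral_dirac' _ hφ]
  rw [this]
  refine Measurable.ite (measurableSet_lt measurable_const measurable_id) ?_ measurable_const
  exact Measurable.lintegral_prod_right' (f := fun z : ℝ × ℝ =>
    ENNReal.ofReal (z.1 * Real.exp (-(z.1 * z.2))) * φ (ENNReal.ofReal z.2)) (by fun_prop)

/-- truncated mean -/
def eM (M : ℕ) (ρ : ℝ) : ℝ≥0∞ := ∫⁻ s, min s M ∂expMeasE ρ
/-- tail mean -/
def qM (M : ℕ) (ρ : ℝ) : ℝ≥0∞ := ∫⁻ s, (s - M) ∂expMeasE ρ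

lemma measurable_eM (M : ℕ) : Measurable (eM M) :=
  measurable_expMeasE (by fun_prop)
lemma measurable_qM (M : ℕ) : Measurable (qM M) :=
  measurable_expMeasE (by fun_prop)

lemma eM_le (M : ℕ) (ρ : ℝ) : eM M ρ ≤ M := by
  calc eM M ρ ≤ ∫⁻ s, M * 1 ∂expMeasE ρ := lintegral_mono fun s => by simp
    _ = M := by rw [lintegral_const_mul _ measurable_const, expMeasE_one, mul_one]

lemma min_add_tsub' (s M : ℝ≥0∞) : min s M + (s - M) = s := by
  rcases le_total s M with h | h
  · rw [min_eq_left h, tsub_eq_zero_of_le h, add_zero]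
  · rw [min_eq_right h, add_tsub_cancel_of_le h]

lemma eM_add_qM (M : ℕ) (ρ : ℝ) : eM M ρ + qM M ρ = (ENNReal.ofReal ρ)⁻¹ := by
  rw [eM, qM, ← lintegral_add_left (by fun_prop), ← expMeasE_mean]
  simp_rw [min_add_tsub']

lemma qM_le (M : ℕ) (ρ : ℝ) : qM M ρ ≤ (ENNReal.ofReal ρ)⁻¹ :=
  (eM_add_qM M ρ) ▸ le_add_self

lemma qM_tendsto {ρ : ℝ} (hρ : 0 < ρ) : Tendsto (fun M => qM M ρ) atTop (𝓝 0) := by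
  have hfin : ∫⁻ s, s ∂expMeasE ρ ≠ ∞ := by
    rw [expMeasE_mean]; simpa using hρ
  have h := tendsto_lintegral_of_dominated_convergence (μ := expMeasE ρ)
    (F := fun (M : ℕ) s => s - (M : ℝ≥0∞)) (f := fun _ => 0) (fun s => s)
    (fun M => by fun_prop) (fun M => ae_of_all _ fun s => tsub_le_self) hfin ?_
  · simpa [qM] using h
  · filter_upwards [ae_lt_top measurable_id' hfin] with s hs
    obtain ⟨N, hN⟩ := ENNReal.exists_nat_gt hs.ne
    refine tendsto_const_nhds.congr' ?_
    filter_upwards [eventually_ge_atTop N] with M hM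
    refine (tsub_eq_zero_of_le (hN.le.trans ?_)).symm
    exact_mod_cast hM

/-! ### The skeleton operator -/

/-- Skeleton transition operator on real functions. -/
def pop {E : Type*} [MeasurableSpace E] [TopologicalSpace E] (S : ChainSetting E)
    (h : E → ℝ) (x : E) : ℝ := ∫ y, S.p x y * h y ∂S.lam

/-- Bounded nonnegative measurable. -/
structure NiceF {E : Type*} [MeasurableSpace E] (B : ℝ) (h : E → ℝ) : Prop where
  meas : Measurable h
  nn : ∀ x, 0 ≤ h x
  le : ∀ x, h x ≤ B

lemma NiceF.integrable {Ω E : Type*} [MeasurableSpace E] [MeasurableSpace Ω] {B : ℝ} {h : E → ℝ}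
    (hh : NiceF B h) (μ : Measure Ω) [IsFiniteMeasure μ] {Z : Ω → E} (hZ : Measurable Z) :
    Integrable (fun ω => h (Z ω)) μ :=
  Integrable.of_bound (hh.meas.comp hZ).aestronglyMeasurable B
    (ae_of_all _ fun ω => by rw [Real.norm_eq_abs, abs_of_nonneg (hh.nn _)]; exact hh.le _)

lemma p_meas (S : ChainSetting E) : Measurable fun z : E × E => S.p z.1 z.2 :=
  S.p_cont.measurable

lemma p_meas' (S : ChainSetting E) (x : E) : Measurable fun y => S.p x y :=
  (p_meas S).comp measurable_prodMk_left

lemma exists_C (S : ChainSetting E) : ∃ C : ℝ, 0 < C ∧ ∀ x y, S.p x y ≤ C := by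
  obtain ⟨z, _, hz⟩ := isCompact_univ.exists_isMaxOn (univ_nonempty (α := E × E))
    S.p_cont.continuousOn
  exact ⟨_, S.p_pos z.1 z.2, fun x y => hz (mem_univ (x, y))⟩

lemma exists_c (S : ChainSetting E) : ∃ c : ℝ, 0 < c ∧ ∀ x y, c ≤ S.p x y := by
  obtain ⟨z, _, hz⟩ := isCompact_univ.exists_isMinOn (univ_nonempty (α := E × E))
    S.p_cont.continuousOn
  exact ⟨_, S.p_pos z.1 z.2, fun x y => hz (mem_univ (x, y))⟩

lemma p_mul_int (S : ChainSetting E) (x : E) {B : ℝ} {h : E → ℝ} (hh : NiceF B h) :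
    Integrable (fun y => S.p x y * h y) S.lam := by
  have := S.lam_prob
  obtain ⟨C, hC, hpC⟩ := exists_C S
  refine Integrable.of_bound ((p_meas' S x).mul hh.meas).aestronglyMeasurable (C * B)
    (ae_of_all _ fun y => ?_)
  rw [Real.norm_eq_abs, abs_of_nonneg (mul_nonneg (S.p_pos _ _).le (hh.nn _))]
  exact mul_le_mul (hpC _ _) (hh.le _) (hh.nn _) hC.le

lemma p_int' (S : ChainSetting E) (x : E) : Integrable (fun y => S.p x y) S.lam := by
  by_contra hc
  have := S.p_int x
  rw [integral_undef hc] at this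
  exact zero_ne_one this

lemma pop_nice (S : ChainSetting E) {B : ℝ} {h : E → ℝ} (hh : NiceF B h) : NiceF B (pop S h) := by
  have := S.lam_prob
  refine ⟨?_, fun x => integral_nonneg fun y => mul_nonneg (S.p_pos _ _).le (hh.nn _), fun x => ?_⟩
  · have : StronglyMeasurable fun z : E × E => S.p z.1 z.2 * h z.2 :=
      ((p_meas S).mul (hh.meas.comp measurable_snd)).stronglyMeasurable
    exact this.integral_prod_right'.measurable
  · calc pop S h x ≤ ∫ y, S.p x y * B ∂S.lam :=
          integral_mono (p_mul_int S x hh) ((p_int' S x).mul_const B)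
            fun y => mul_le_mul_of_nonneg_left (hh.le y) (S.p_pos _ _).le
      _ = B := by rw [integral_mul_const, S.p_int, one_mul]

lemma lintegral_skel (S : ChainSetting E) (x : E) {ψ : E → ℝ≥0∞} (hψ : Measurable ψ) :
    ∫⁻ y, ψ y ∂S.skel x = ∫⁻ y, ENNReal.ofReal (S.p x y) * ψ y ∂S.lam := by
  rw [ChainSetting.skel, lintegral_withDensity_eq_lintegral_mul _ (p_meas' S x).ennreal_ofReal hψ]
  rfl

lemma lintegral_skel_le (S : ChainSetting E) {C : ℝ} (hC : ∀ x y, S.p x y ≤ C) (x : E)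
    {ψ : E → ℝ≥0∞} (hψ : Measurable ψ) :
    ∫⁻ y, ψ y ∂S.skel x ≤ ENNReal.ofReal C * ∫⁻ y, ψ y ∂S.lam := by
  rw [lintegral_skel S x hψ, ← lintegral_const_mul _ hψ]
  exact lintegral_mono fun y => mul_le_mul_left (ENNReal.ofReal_le_ofReal (hC x y)) _

lemma lintegral_skel_ofReal (S : ChainSetting E) (x : E) {B : ℝ} {h : E → ℝ} (hh : NiceF B h) :
    ∫⁻ y, ENNReal.ofReal (h y) ∂S.skel x = ENNReal.ofReal (pop S h x) := by
  rw [lintegral_skel S x hh.meas.ennreal_ofReal, pop,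
    ofReal_integral_eq_lintegral_ofReal (p_mul_int S x hh)
      (ae_of_all _ fun y => mul_nonneg (S.p_pos _ _).le (hh.nn _))]
  exact lintegral_congr fun y => (ENNReal.ofReal_mul (S.p_pos _ _).le).symm

lemma measurable_skel (S : ChainSetting E) : Measurable S.skel := by
  have := S.lam_prob
  refine Measure.measurable_of_measurable_coe _ fun s hs => ?_
  have : (fun x => S.skel x s)
      = fun x => ∫⁻ y, ENNReal.ofReal (S.p x y) * s.indicator 1 y ∂S.lam := by
    ext x
    rw [← lintegral_skel S x (measurable_one.indicator hs), lintegral_indicator_one hs]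
  rw [this]
  exact Measurable.lintegral_prod_right' (f := fun z : E × E =>
    ENNReal.ofReal (S.p z.1 z.2) * s.indicator 1 z.2)
    ((p_meas S).ennreal_ofReal.mul ((measurable_one.indicator hs).comp measurable_snd))

lemma inv_lintegral (S : ChainSetting E) (π₀ : Measure E)
    (hπ₀inv : ∀ s : Set E, MeasurableSet s → ∫⁻ x, S.skel x s ∂π₀ = π₀ s)
    {ψ : E → ℝ≥0∞} (hψ : Measurable ψ) :
    ∫⁻ x, ∫⁻ y, ψ y ∂S.skel x ∂π₀ = ∫⁻ x, ψ x ∂π₀ := by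
  have hb : π₀.bind S.skel = π₀ := by
    ext s hs
    rw [Measure.bind_apply hs (measurable_skel S).aemeasurable, hπ₀inv s hs]
  conv_rhs => rw [← hb]
  rw [Measure.lintegral_bind (measurable_skel S).aemeasurable hψ.aemeasurable]

lemma inv_le (S : ChainSetting E) (π₀ : Measure E) (hπ₀ : IsProbabilityMeasure π₀)
    (hπ₀inv : ∀ s : Set E, MeasurableSet s → ∫⁻ x, S.skel x s ∂π₀ = π₀ s)
    {C : ℝ} (hC : ∀ x y, S.p x y ≤ C) {ψ : E → ℝ≥0∞} (hψ : Measurable ψ) :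
    ∫⁻ x, ψ x ∂π₀ ≤ ENNReal.ofReal C * ∫⁻ y, ψ y ∂S.lam := by
  rw [← inv_lintegral S π₀ hπ₀inv hψ]
  calc _ ≤ ∫⁻ x, ENNReal.ofReal C * ∫⁻ y, ψ y ∂S.lam ∂π₀ :=
        lintegral_mono fun x => lintegral_skel_le S hC x hψ
    _ = _ := by simp

lemma inv_integral (S : ChainSetting E) (π₀ : Measure E) (hπ₀ : IsProbabilityMeasure π₀)
    (hπ₀inv : ∀ s : Set E, MeasurableSet s → ∫⁻ x, S.skel x s ∂π₀ = π₀ s)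
    {B : ℝ} {h : E → ℝ} (hh : NiceF B h) : ∫ x, pop S h x ∂π₀ = ∫ x, h x ∂π₀ := by
  have h1 := pop_nice S hh
  rw [integral_eq_lintegral_of_nonneg_ae (ae_of_all _ h1.nn) h1.meas.aestronglyMeasurable,
    integral_eq_lintegral_of_nonneg_ae (ae_of_all _ hh.nn) hh.meas.aestronglyMeasurable,
    ← inv_lintegral S π₀ hπ₀inv hh.meas.ennreal_ofReal]
  simp_rw [lintegral_skel_ofReal S _ hh]

lemma pop_osc (S : ChainSetting E) {c : ℝ} (hc : ∀ x y, c ≤ S.p x y) {B D : ℝ} {h : E → ℝ}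
    (hh : NiceF B h) (hD : ∀ x y, h x - h y ≤ D) (x y : E) :
    pop S h x - pop S h y ≤ (1 - c) * D := by
  have := S.lam_prob
  obtain ⟨z⟩ := ‹Nonempty E›
  -- bounds: `inf h ≤ h ≤ inf h + D`
  set m := ⨅ z, h z with hm
  have hbdd : BddBelow (range h) := ⟨0, by rintro _ ⟨z, rfl⟩; exact hh.nn z⟩
  have hml : ∀ z, m ≤ h z := fun z => ciInf_le hbdd z
  have hmu : ∀ z, h z ≤ m + D := fun z => by
    have : h z - D ≤ m := le_ciInf fun w => by linarith [hD z w]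
    linarith
  have hhi : Integrable h S.lam := hh.integrable S.lam measurable_id
  have e : ∀ x, pop S h x = ∫ y, (S.p x y - c) * h y ∂S.lam + c * ∫ y, h y ∂S.lam := by
    intro x
    rw [← integral_const_mul, ← integral_add]
    · simp only [pop]; congr 1; ext y; ring
    · have := (p_mul_int S x hh).sub (hhi.const_mul c)
      refine this.congr (ae_of_all _ fun y => ?_)
      simp; ring
    · exact hhi.const_mul c
  have hi : ∀ x, Integrable (fun y => (S.p x y - c)) S.lam := fun x =>
    (p_int' S x).sub (integrable_const c)
  have hi2 : ∀ x, Integrable (fun y => (S.p x y - c) * h y) S.lam := fun x => by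
    have := (p_mul_int S x hh).sub (hhi.const_mul c)
    refine this.congr (ae_of_all _ fun y => ?_)
    simp; ring
  have hic : ∀ x, ∫ y, (S.p x y - c) ∂S.lam = 1 - c := fun x => by
    rw [integral_sub (p_int' S x) (integrable_const c), S.p_int]; simp
  have hu : ∫ y, (S.p x y - c) * h y ∂S.lam ≤ (1 - c) * (m + D) := by
    rw [← hic x, ← integral_mul_const]
    exact integral_mono (hi2 x) ((hi x).mul_const _)
      fun z => mul_le_mul_of_nonneg_left (hmu z) (sub_nonneg.mpr (hc _ _))
  have hl : (1 - c) * m ≤ ∫ z, (S.p y z - c) * h z ∂S.lam := by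
    rw [← hic y, ← integral_mul_const]
    exact integral_mono ((hi y).mul_const _) (hi2 y)
      fun z => mul_le_mul_of_nonneg_left (hml z) (sub_nonneg.mpr (hc _ _))
  rw [e x, e y]
  linarith

lemma c_le_one (S : ChainSetting E) {c : ℝ} (hc : ∀ x y, c ≤ S.p x y) : c ≤ 1 := by
  have := S.lam_prob
  obtain ⟨x⟩ := ‹Nonempty E›
  rw [← S.p_int x]
  calc c = ∫ _y, c ∂S.lam := by simp
    _ ≤ _ := integral_mono (integrable_const c) (p_int' S x) fun y => hc x y

lemma iter_nice (S : ChainSetting E) {B : ℝ} {h : E → ℝ} (hh : NiceF B h) (k : ℕ) :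
    NiceF B ((pop S)^[k] h) := by
  induction k with
  | zero => exact hh
  | succ k ih => rw [Function.iterate_succ_apply']; exact pop_nice S ih

lemma iter_close (S : ChainSetting E) (π₀ : Measure E) (hπ₀ : IsProbabilityMeasure π₀)
    (hπ₀inv : ∀ s : Set E, MeasurableSet s → ∫⁻ x, S.skel x s ∂π₀ = π₀ s)
    {c : ℝ} (hc : ∀ x y, c ≤ S.p x y) {B : ℝ} {h : E → ℝ} (hh : NiceF B h) (k : ℕ) (x : E) :
    |(pop S)^[k] h x - ∫ y, h y ∂π₀| ≤ B * (1 - c) ^ k := by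
  have hosc : ∀ k x y, (pop S)^[k] h x - (pop S)^[k] h y ≤ B * (1 - c) ^ k := by
    intro k
    induction k with
    | zero => intro x y; simp only [Function.iterate_zero, id, pow_zero]; linarith [hh.le x, hh.nn y]
    | succ k ih =>
      intro x y
      rw [Function.iterate_succ_apply']
      refine (pop_osc S hc (iter_nice S hh k) ih x y).trans_eq ?_
      ring
  have hinv : ∀ k, ∫ y, (pop S)^[k] h y ∂π₀ = ∫ y, h y ∂π₀ := by
    intro k
    induction k with
    | zero => rfl
    | succ k ih =>
      rw [← ih, Function.iterate_succ_apply']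
      exact inv_integral S π₀ hπ₀ hπ₀inv (iter_nice S hh k)
  have hint : Integrable ((pop S)^[k] h) π₀ := (iter_nice S hh k).integrable π₀ measurable_id
  have e : (pop S)^[k] h x - ∫ y, h y ∂π₀ = ∫ y, ((pop S)^[k] h x - (pop S)^[k] h y) ∂π₀ := by
    rw [integral_sub (integrable_const _) hint, hinv]; simp
  rw [e]
  have := norm_integral_le_of_norm_le_const (μ := π₀)
    (f := fun y => (pop S)^[k] h x - (pop S)^[k] h y) (C := B * (1 - c) ^ k)
    (ae_of_all _ fun y => abs_le.mpr ⟨by linarith [hosc k y x], hosc k x y⟩)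
  simpa using this

/-! ### Consequences of the chain law -/

lemma meas_Z (i : ℕ) : Measurable fun ω : Traj E => ω.1 i :=
  (measurable_pi_apply i).comp measurable_fst
lemma meas_tau (i : ℕ) : Measurable fun ω : Traj E => ω.2 i :=
  (measurable_pi_apply i).comp measurable_snd

lemma markov_l {S : ChainSetting E} {x : E} {P : Measure (Traj E)}
    (hP : IsChainLaw S.r S.skel x P) {i j : ℕ} (hij : i ≤ j) {φ ψ : E → ℝ≥0∞}
    (hφ : Measurable φ) (hψ : Measurable ψ) :
    ∫⁻ ω, φ (ω.1 i) * ψ (ω.1 (j + 1)) ∂P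
      = ∫⁻ ω, φ (ω.1 i) * ∫⁻ y, ψ y ∂S.skel (ω.1 j) ∂P :=
  hP.markov j (fun v => φ (v ⟨i, by omega⟩)) ψ (hφ.comp (measurable_pi_apply _)) hψ

lemma NiceF.mul {Ω : Type*} [MeasurableSpace Ω] {B B' : ℝ} {h h' : Ω → ℝ} (hh : NiceF B h)
    (hh' : NiceF B' h') : NiceF (B * B') fun x => h x * h' x :=
  ⟨hh.meas.mul hh'.meas, fun x => mul_nonneg (hh.nn x) (hh'.nn x), fun x =>
    mul_le_mul (hh.le x) (hh'.le x) (hh'.nn x) ((hh.nn x).trans (hh.le x))⟩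

lemma NiceF.comp {Ω Ω' : Type*} [MeasurableSpace Ω] [MeasurableSpace Ω'] {B : ℝ} {h : Ω → ℝ}
    (hh : NiceF B h) {Z : Ω' → Ω} (hZ : Measurable Z) : NiceF B fun ω => h (Z ω) :=
  ⟨hh.meas.comp hZ, fun x => hh.nn _, fun x => hh.le _⟩

lemma NiceF.integral_eq {Ω : Type*} [MeasurableSpace Ω] {B : ℝ} {h : Ω → ℝ}
    (hh : NiceF B h) (μ : Measure Ω) : ∫ x, h x ∂μ = (∫⁻ x, ENNReal.ofReal (h x) ∂μ).toReal :=
  integral_eq_lintegral_of_nonneg_ae (ae_of_all _ hh.nn) hh.meas.aestronglyMeasurable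

lemma markov_r {S : ChainSetting E} {x : E} {P : Measure (Traj E)}
    (hP : IsChainLaw S.r S.skel x P) {i j : ℕ} (hij : i ≤ j) {B B' : ℝ} {φ ψ : E → ℝ}
    (hφ : NiceF B φ) (hψ : NiceF B' ψ) :
    ∫ ω, φ (ω.1 i) * ψ (ω.1 (j + 1)) ∂P = ∫ ω, φ (ω.1 i) * pop S ψ (ω.1 j) ∂P := by
  rw [((hφ.comp (meas_Z i)).mul (hψ.comp (meas_Z (j+1)))).integral_eq P,
    ((hφ.comp (meas_Z i)).mul ((pop_nice S hψ).comp (meas_Z j))).integral_eq P]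
  simp_rw [ENNReal.ofReal_mul (hφ.nn _)]
  rw [markov_l hP hij hφ.meas.ennreal_ofReal hψ.meas.ennreal_ofReal]
  simp_rw [lintegral_skel_ofReal S _ hψ]

lemma markov_k {S : ChainSetting E} {x : E} {P : Measure (Traj E)}
    (hP : IsChainLaw S.r S.skel x P) (i k : ℕ) {B B' : ℝ} {φ ψ : E → ℝ}
    (hφ : NiceF B φ) (hψ : NiceF B' ψ) :
    ∫ ω, φ (ω.1 i) * ψ (ω.1 (i + k)) ∂P = ∫ ω, φ (ω.1 i) * (pop S)^[k] ψ (ω.1 i) ∂P := by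
  induction k generalizing ψ with
  | zero => rfl
  | succ k ih =>
    rw [← add_assoc, markov_r hP (by omega) hφ hψ, ih (pop_nice S hψ), Function.iterate_succ_apply]

lemma hold_I {S : ChainSetting E} {x : E} {P : Measure (Traj E)}
    (hP : IsChainLaw S.r S.skel x P) (I : Finset ℕ) {F : (ℕ → E) → ℝ≥0∞} (hF : Measurable F)
    {a : ℝ≥0∞ → ℝ≥0∞} (ha : Measurable a) :
    ∫⁻ ω, F ω.1 * ∏ i ∈ I, a (ω.2 i) ∂P
      = ∫⁻ ω, F ω.1 * ∏ i ∈ I, ∫⁻ s, a s ∂expMeasE (S.r (ω.1 i)) ∂P := by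
  obtain ⟨n, hn⟩ : ∃ n, I ⊆ Finset.range n :=
    ⟨I.sup id + 1, fun i hi => Finset.mem_range.mpr (Nat.lt_succ_of_le (Finset.le_sup (f := id) hi))⟩
  have h := hP.holding n F (fun k s => if (k : ℕ) ∈ I then a s else 1) hF
    (fun k => by split_ifs <;> fun_prop)
  have e : ∀ u : ℕ → ℝ≥0∞, ∏ k : Fin n, (if (k : ℕ) ∈ I then u k else 1) = ∏ k ∈ I, u k := by
    intro u
    rw [Fin.prod_univ_eq_prod_range (fun k => if k ∈ I then u k else 1), Finset.prod_ite_mem,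
      Finset.inter_eq_right.mpr hn]
  have e2 : ∀ (ω : Traj E) (k : Fin n),
      ∫⁻ s, (if (k : ℕ) ∈ I then a s else 1) ∂expMeasE (S.r (ω.1 k))
        = if (k : ℕ) ∈ I then ∫⁻ s, a s ∂expMeasE (S.r (ω.1 k)) else 1 := by
    intro ω k
    split_ifs
    · rfl
    · exact expMeasE_one _
  simp_rw [e2] at h
  convert h using 3 with ω ω
  · rw [e (fun k => a (ω.2 k))]
  · rw [e (fun k => ∫⁻ s, a s ∂expMeasE (S.r (ω.1 k)))]

/-- truncated summand -/
def VV {E : Type*} (g : E → ℝ) (M i : ℕ) (ω : Traj E) : ℝ := g (ω.1 i) * (min (ω.2 i) M).toReal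
/-- conditional mean of the truncated summand -/
def hh {E : Type*} [MeasurableSpace E] [TopologicalSpace E] (S : ChainSetting E) (g : E → ℝ)
    (M : ℕ) (z : E) : ℝ := g z * (eM M (S.r z)).toReal

lemma trunc_nice (M i : ℕ) : NiceF (M : ℝ) fun ω : Traj E => (min (ω.2 i) (M : ℝ≥0∞)).toReal := by
  refine ⟨((meas_tau i).min measurable_const).ennreal_toReal, fun _ => ENNReal.toReal_nonneg,
    fun ω => ?_⟩
  have := ENNReal.toReal_mono (ENNReal.natCast_ne_top M) (min_le_right (ω.2 i) (M : ℝ≥0∞))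
  simpa using this

lemma VV_nice {B : ℝ} {g : E → ℝ} (hg : NiceF B g) (M i : ℕ) :
    NiceF (B * M) (VV (E := E) g M i) := (hg.comp (meas_Z i)).mul (trunc_nice M i)

lemma hh_nice (S : ChainSetting E) {B : ℝ} {g : E → ℝ} (hg : NiceF B g) (M : ℕ) :
    NiceF (B * M) (hh S g M) := by
  refine hg.mul ⟨((measurable_eM M).comp S.r_cont.measurable).ennreal_toReal,
    fun _ => ENNReal.toReal_nonneg, fun z => ?_⟩
  have := ENNReal.toReal_mono (ENNReal.natCast_ne_top M) (eM_le M (S.r z))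
  simpa using this

lemma ofReal_VV {B : ℝ} {g : E → ℝ} (hg : NiceF B g) (M i : ℕ) (ω : Traj E) :
    ENNReal.ofReal (VV g M i ω) = ENNReal.ofReal (g (ω.1 i)) * min (ω.2 i) M := by
  rw [VV, ENNReal.ofReal_mul (hg.nn _), ENNReal.ofReal_toReal]
  exact ne_top_of_le_ne_top (ENNReal.natCast_ne_top M) (min_le_right _ _)

lemma ofReal_hh (S : ChainSetting E) {B : ℝ} {g : E → ℝ} (hg : NiceF B g) (M : ℕ) (z : E) :
    ENNReal.ofReal (hh S g M z) = ENNReal.ofReal (g z) * eM M (S.r z) := by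
  rw [hh, ENNReal.ofReal_mul (hg.nn _), ENNReal.ofReal_toReal]
  exact ne_top_of_le_ne_top (ENNReal.natCast_ne_top M) (eM_le _ _)

lemma int_VV {S : ChainSetting E} {x : E} {P : Measure (Traj E)}
    (hP : IsChainLaw S.r S.skel x P) {B : ℝ} {g : E → ℝ} (hg : NiceF B g) (M i : ℕ) :
    ∫ ω, VV g M i ω ∂P = ∫ ω, hh S g M (ω.1 i) ∂P := by
  rw [(VV_nice hg M i).integral_eq P, ((hh_nice S hg M).comp (meas_Z i)).integral_eq P]
  simp_rw [ofReal_VV hg, ofReal_hh S hg]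
  have := hold_I hP {i} (F := fun z => ENNReal.ofReal (g (z i)))
    (hg.meas.comp (measurable_pi_apply i)).ennreal_ofReal (a := fun s => min s M) (by fun_prop)
  simp only [Finset.prod_singleton] at this
  rw [this]; rfl

lemma int_VV2 {S : ChainSetting E} {x : E} {P : Measure (Traj E)}
    (hP : IsChainLaw S.r S.skel x P) {B : ℝ} {g : E → ℝ} (hg : NiceF B g) (M i j : ℕ)
    (hij : i ≠ j) :
    ∫ ω, VV g M i ω * VV g M j ω ∂P = ∫ ω, hh S g M (ω.1 i) * hh S g M (ω.1 j) ∂P := by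
  rw [((VV_nice hg M i).mul (VV_nice hg M j)).integral_eq P,
    (((hh_nice S hg M).comp (meas_Z i)).mul ((hh_nice S hg M).comp (meas_Z j))).integral_eq P]
  simp_rw [ENNReal.ofReal_mul ((VV_nice hg M i).nn _), ENNReal.ofReal_mul ((hh_nice S hg M).nn _),
    ofReal_VV hg, ofReal_hh S hg]
  have := hold_I hP {i, j} (F := fun z => ENNReal.ofReal (g (z i)) * ENNReal.ofReal (g (z j)))
    ((hg.meas.comp (measurable_pi_apply i)).ennreal_ofReal.mul
      (hg.meas.comp (measurable_pi_apply j)).ennreal_ofReal)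
    (a := fun s => min s M) (by fun_prop)
  simp only [Finset.prod_pair hij] at this
  have e1 : ∀ ω : Traj E, ENNReal.ofReal (g (ω.1 i)) * min (ω.2 i) (M : ℝ≥0∞) *
      (ENNReal.ofReal (g (ω.1 j)) * min (ω.2 j) (M : ℝ≥0∞))
      = ENNReal.ofReal (g (ω.1 i)) * ENNReal.ofReal (g (ω.1 j)) *
        (min (ω.2 i) (M : ℝ≥0∞) * min (ω.2 j) (M : ℝ≥0∞)) := fun ω => mul_mul_mul_comm _ _ _ _
  simp_rw [e1]
  rw [this]
  congr 1
  exact lintegral_congr fun ω => mul_mul_mul_comm _ _ _ _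

lemma cov_bound {S : ChainSetting E} {x : E} {P : Measure (Traj E)}
    (hP : IsChainLaw S.r S.skel x P) (π₀ : Measure E) (hπ₀ : IsProbabilityMeasure π₀)
    (hπ₀inv : ∀ s : Set E, MeasurableSet s → ∫⁻ x, S.skel x s ∂π₀ = π₀ s)
    {c : ℝ} (hc : ∀ x y, c ≤ S.p x y) {B : ℝ} {g : E → ℝ} (hg : NiceF B g) (M i k : ℕ) :
    |∫ ω, (VV g M i ω - ∫ y, hh S g M y ∂π₀) * (VV g M (i + k) ω - ∫ y, hh S g M y ∂π₀) ∂P|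
      ≤ (B * M) * (B * M) * (1 - c) ^ k := by
  have := hP.prob
  have hn := hh_nice S hg M
  set m := ∫ y, hh S g M y ∂π₀ with hm
  have hV := fun i => VV_nice hg M i
  have hm0 : 0 ≤ m := integral_nonneg hn.nn
  have hm1 : m ≤ B * M := by
    have := integral_mono (μ := π₀) (hn.integrable π₀ measurable_id) (integrable_const (B * M)) hn.le
    simpa using this
  have key : ∀ (u v : Traj E → ℝ) (b : ℝ), (∀ ω, |u ω| ≤ B * M) → (∀ ω, |v ω| ≤ b) →
      |∫ ω, u ω * v ω ∂P| ≤ (B * M) * b := by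
    intro u v b hu hv
    have := norm_integral_le_of_norm_le_const (μ := P) (f := fun ω => u ω * v ω) (C := B * M * b)
      (ae_of_all _ fun ω => by
        rw [Real.norm_eq_abs, abs_mul]
        exact mul_le_mul (hu ω) (hv ω) (abs_nonneg _) ((abs_nonneg _).trans (hu ω)))
    simpa using this
  rcases Nat.eq_zero_or_pos k with rfl | hk
  · simp only [add_zero, pow_zero, mul_one]
    refine key _ _ _ ?_ ?_ <;>
    · intro ω
      rw [abs_le]
      constructor <;> linarith [(hV i).nn ω, (hV i).le ω]
  · have hI : ∀ i, Integrable (VV (E := E) g M i) P := fun i => (hV i).integrable P measurable_id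
    have hI2 : ∀ i j, Integrable (fun ω => VV (E := E) g M i ω * VV g M j ω) P := fun i j =>
      ((hV i).mul (hV j)).integrable P measurable_id
    set H := (pop S)^[k] (hh S g M) with hH
    have hHn : NiceF (B * M) H := iter_nice S hn k
    have j1 : Integrable (fun ω : Traj E => hh S g M (ω.1 i)) P := hn.integrable P (meas_Z i)
    have j2 : Integrable (fun ω : Traj E => H (ω.1 i)) P := hHn.integrable P (meas_Z i)
    have j3 : Integrable (fun ω : Traj E => hh S g M (ω.1 i) * H (ω.1 i)) P :=
      (hn.mul hHn).integrable P (meas_Z i)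
    have hone : NiceF (1:ℝ) (fun _ : E => (1:ℝ)) :=
      ⟨measurable_const, fun _ => zero_le_one, fun _ => le_rfl⟩
    have e3 : ∫ ω, VV g M (i + k) ω ∂P = ∫ ω, H (ω.1 i) ∂P := by
      rw [int_VV hP hg]
      simpa using markov_k hP i k hone hn
    have expand : ∀ (u v : Traj E → ℝ), Integrable u P → Integrable v P →
        Integrable (fun ω => u ω * v ω) P →
        ∫ ω, (u ω - m) * (v ω - m) ∂P
          = ∫ ω, u ω * v ω ∂P - m * ∫ ω, u ω ∂P - m * ∫ ω, v ω ∂P + m * m := by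
      intro u v hu hv huv
      have : ∀ ω, (u ω - m) * (v ω - m) = u ω * v ω - m * u ω - m * v ω + m * m := fun ω => by ring
      simp_rw [this]
      have k1 : Integrable (fun ω => u ω * v ω - m * u ω) P := huv.sub (hu.const_mul m)
      have k2 : Integrable (fun ω => u ω * v ω - m * u ω - m * v ω) P := k1.sub (hv.const_mul m)
      rw [integral_add k2 (integrable_const _), integral_sub k1 (hv.const_mul m),
        integral_sub huv (hu.const_mul m), integral_const_mul, integral_const_mul]
      simp
    have e : ∫ ω, (VV g M i ω - m) * (VV g M (i + k) ω - m) ∂P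
        = ∫ ω, (hh S g M (ω.1 i) - m) * (H (ω.1 i) - m) ∂P := by
      rw [expand _ _ (hI i) (hI (i+k)) (hI2 i (i+k)), expand _ _ j1 j2 j3, e3, int_VV hP hg,
        int_VV2 hP hg M i (i+k) (by omega), markov_k hP i k hn hn]
    rw [e, mul_assoc (B * M)]
    refine key _ _ _ (fun ω => ?_) (fun ω => iter_close S π₀ hπ₀ hπ₀inv hc hn k _)
    rw [abs_le]
    constructor <;> linarith [hn.nn (ω.1 i), hn.le (ω.1 i)]

lemma cheb {S : ChainSetting E} (π₀ : Measure E) (hπ₀ : IsProbabilityMeasure π₀)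
    (hπ₀inv : ∀ s : Set E, MeasurableSet s → ∫⁻ x, S.skel x s ∂π₀ = π₀ s)
    {B : ℝ} {g : E → ℝ} (hg : NiceF B g) (M : ℕ) {δ : ℝ} (hδ : 0 < δ) :
    ∃ K : ℝ, 0 ≤ K ∧ ∀ x P, IsChainLaw S.r S.skel x P → ∀ n : ℕ, 0 < n →
      P {ω | n * δ < |∑ i ∈ Finset.range n, (VV g M i ω - ∫ y, hh S g M y ∂π₀)|}
        ≤ ENNReal.ofReal (K / n) := by
  obtain ⟨c, hc0, hc⟩ := exists_c S
  have hc1 := c_le_one S hc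
  have hn := hh_nice S hg M
  set m := ∫ y, hh S g M y ∂π₀ with hm
  have hV := fun i => VV_nice hg M i
  have hm0 : 0 ≤ m := integral_nonneg hn.nn
  have hm1 : m ≤ B * M := by
    have := integral_mono (μ := π₀) (hn.integrable π₀ measurable_id) (integrable_const (B * M)) hn.le
    simpa using this
  set A := 2 * ((B * M) * (B * M)) / (1 - (1 - c)) with hA
  have hA0 : 0 ≤ A := by
    rw [hA, show 1 - (1 - c) = c by ring]; exact div_nonneg (mul_nonneg two_pos.le (mul_self_nonneg _)) hc0.le
  refine ⟨A / δ ^ 2, by positivity, fun x P hP n hn0 => ?_⟩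
  have := hP.prob
  have hYm : ∀ i, Measurable fun ω : Traj E => VV g M i ω - m := fun i => (hV i).meas.sub_const m
  have hYB : ∀ i (ω : Traj E), |VV g M i ω - m| ≤ B * M := fun i ω => by
    rw [abs_le]; constructor <;> linarith [(hV i).nn ω, (hV i).le ω]
  have h2 := second_moment P (fun i ω => VV g M i ω - m) hYm (B * M) hYB ((B * M) * (B * M)) (1 - c)
    (mul_self_nonneg _) (by linarith) (by linarith)
    (fun i k => cov_bound hP π₀ hπ₀ hπ₀inv hc hg M i k) n
  have hint : Integrable (fun ω => (∑ i ∈ Finset.range n, (VV g M i ω - m)) ^ 2) P := by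
    refine Integrable.of_bound ((Finset.measurable_sum _ fun i _ => hYm i).pow_const 2).aestronglyMeasurable
      ((n * (B * M)) ^ 2) (ae_of_all _ fun ω => ?_)
    rw [Real.norm_eq_abs, abs_pow]
    refine pow_le_pow_left₀ (abs_nonneg _) ?_ 2
    refine (Finset.abs_sum_le_sum_abs _ _).trans ?_
    refine (Finset.sum_le_sum fun i _ => hYB i ω).trans_eq ?_
    simp
  have h3 := mul_meas_ge_le_integral_of_nonneg (ae_of_all _ fun ω => sq_nonneg _) hint ((n * δ) ^ 2)
  have hnpos : (0:ℝ) < n := by exact_mod_cast hn0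
  have h4 : P.real {ω | (n * δ) ^ 2 ≤ (∑ i ∈ Finset.range n, (VV g M i ω - m)) ^ 2}
      ≤ A / δ ^ 2 / n := by
    have h5 := h3.trans h2
    rw [div_div, le_div_iff₀ (by positivity)]
    have : (n:ℝ) * (P.real {ω | (n * δ) ^ 2 ≤ (∑ i ∈ Finset.range n, (VV g M i ω - m)) ^ 2}
      * (δ ^ 2 * n)) ≤ n * A := by
      refine le_trans (le_of_eq ?_) h5
      ring
    exact le_of_mul_le_mul_left this hnpos
  refine le_trans (measure_mono ?_) (ENNReal.le_ofReal_iff_toReal_le (measure_ne_top _ _) (by positivity) |>.mpr h4)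
  intro ω hω
  have hω : n * δ < |∑ i ∈ Finset.range n, (VV g M i ω - m)| := hω
  show (n * δ) ^ 2 ≤ (∑ i ∈ Finset.range n, (VV g M i ω - m)) ^ 2
  rw [← sq_abs (∑ i ∈ Finset.range n, (VV g M i ω - m))]
  exact pow_le_pow_left₀ (by positivity) hω.le 2

/-! ### Tails -/

lemma lint_Z0 {S : ChainSetting E} {x : E} {P : Measure (Traj E)}
    (hP : IsChainLaw S.r S.skel x P) {ψ : E → ℝ≥0∞} (hψ : Measurable ψ) :
    ∫⁻ ω, ψ (ω.1 0) ∂P = ψ x := by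
  rw [← lintegral_map hψ (meas_Z 0), hP.init, lintegral_dirac' _ hψ]

lemma lint_Zsucc {S : ChainSetting E} {x : E} {P : Measure (Traj E)}
    (hP : IsChainLaw S.r S.skel x P) {C : ℝ} (hC : ∀ x y, S.p x y ≤ C) (i : ℕ)
    {ψ : E → ℝ≥0∞} (hψ : Measurable ψ) :
    ∫⁻ ω, ψ (ω.1 (i + 1)) ∂P ≤ ENNReal.ofReal C * ∫⁻ y, ψ y ∂S.lam := by
  have := hP.prob
  have h := markov_l hP (le_refl i) (φ := fun _ => 1) measurable_const hψ
  simp only [one_mul] at h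
  rw [h]
  calc _ ≤ ∫⁻ ω, ENNReal.ofReal C * ∫⁻ y, ψ y ∂S.lam ∂P :=
        lintegral_mono fun ω => lintegral_skel_le S hC _ hψ
    _ = _ := by simp

lemma tail_bound {S : ChainSetting E} {x : E} {P : Measure (Traj E)}
    (hP : IsChainLaw S.r S.skel x P) {C : ℝ} (hC : ∀ x y, S.p x y ≤ C) (M n : ℕ) :
    ∫⁻ ω, ∑ i ∈ Finset.range n, (ω.2 i - M) ∂P
      ≤ (ENNReal.ofReal (S.r x))⁻¹ + n * (ENNReal.ofReal C * ∫⁻ y, qM M (S.r y) ∂S.lam) := by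
  have hq : Measurable fun y => qM M (S.r y) := (measurable_qM M).comp S.r_cont.measurable
  have e : ∀ i, ∫⁻ ω, (ω.2 i - M) ∂P = ∫⁻ ω, qM M (S.r (ω.1 i)) ∂P := by
    intro i
    have := hold_I hP {i} (F := fun _ => 1) measurable_const (a := fun s => s - M) (by fun_prop)
    simpa [qM] using this
  rw [lintegral_finsetSum _ fun i _ => (meas_tau i).sub_const _]
  simp_rw [e]
  cases n with
  | zero => simp
  | succ n =>
    rw [Finset.sum_range_succ', add_comm]
    refine add_le_add ?_ ?_
    · rw [lint_Z0 hP hq]; exact qM_le _ _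
    · refine (Finset.sum_le_sum fun i _ => lint_Zsucc hP hC i hq).trans ?_
      rw [Finset.sum_const, nsmul_eq_mul, Finset.card_range]
      gcongr
      simp

lemma exists_M (S : ChainSetting E) (C : ℝ) {κ : ℝ} (hκ : 0 < κ) :
    ∃ M : ℕ, ENNReal.ofReal C * ∫⁻ y, qM M (S.r y) ∂S.lam ≤ ENNReal.ofReal κ := by
  have hmr : Measurable fun y => (ENNReal.ofReal (S.r y))⁻¹ :=
    S.r_cont.measurable.ennreal_ofReal.inv
  have h : Tendsto (fun M : ℕ => ∫⁻ y, qM M (S.r y) ∂S.lam) atTop (𝓝 0) := by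
    have h := tendsto_lintegral_of_dominated_convergence (μ := S.lam)
      (F := fun (M : ℕ) y => qM M (S.r y)) (f := fun _ => 0) (fun y => (ENNReal.ofReal (S.r y))⁻¹)
      (fun M => (measurable_qM M).comp S.r_cont.measurable)
      (fun M => ae_of_all _ fun y => qM_le _ _) S.inv_r_int ?_
    · simpa using h
    · filter_upwards [ae_lt_top hmr S.inv_r_int] with y hy
      refine qM_tendsto ?_
      simpa [ENNReal.inv_lt_top] using hy
  have h2 : Tendsto (fun M : ℕ => ENNReal.ofReal C * ∫⁻ y, qM M (S.r y) ∂S.lam) atTop (𝓝 0) := by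
    simpa using ENNReal.Tendsto.const_mul h (Or.inr ENNReal.ofReal_ne_top)
  exact (h2.eventually_le_const (ENNReal.ofReal_pos.mpr hκ)).exists

/-- limiting constant -/
def bb {E : Type*} [MeasurableSpace E] [TopologicalSpace E] (S : ChainSetting E) (π₀ : Measure E)
    (g : E → ℝ) : ℝ := (∫⁻ z, ENNReal.ofReal (g z) * (ENNReal.ofReal (S.r z))⁻¹ ∂π₀).toReal

lemma m_close {S : ChainSetting E} (π₀ : Measure E) (hπ₀ : IsProbabilityMeasure π₀)
    (hπ₀inv : ∀ s : Set E, MeasurableSet s → ∫⁻ x, S.skel x s ∂π₀ = π₀ s)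
    {B : ℝ} {g : E → ℝ} (hB : 0 ≤ B) (hg : NiceF B g) {C : ℝ} (hC : ∀ x y, S.p x y ≤ C)
    (M : ℕ) {κ : ℝ} (hκ : 0 < κ)
    (hM : ENNReal.ofReal C * ∫⁻ y, qM M (S.r y) ∂S.lam ≤ ENNReal.ofReal κ) :
    |∫ y, hh S g M y ∂π₀ - bb S π₀ g| ≤ B * κ := by
  have hq : Measurable fun y => qM M (S.r y) := (measurable_qM M).comp S.r_cont.measurable
  have he : Measurable fun y => eM M (S.r y) := (measurable_eM M).comp S.r_cont.measurable
  have h1 : ∫⁻ z, ENNReal.ofReal (g z) * (ENNReal.ofReal (S.r z))⁻¹ ∂π₀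
      = ∫⁻ z, ENNReal.ofReal (hh S g M z) ∂π₀ + ∫⁻ z, ENNReal.ofReal (g z) * qM M (S.r z) ∂π₀ := by
    simp_rw [← eM_add_qM M, mul_add, ofReal_hh S hg]
    exact lintegral_add_left (hg.meas.ennreal_ofReal.mul he) _
  have h2 : ∫⁻ z, ENNReal.ofReal (g z) * qM M (S.r z) ∂π₀ ≤ ENNReal.ofReal (B * κ) := by
    calc _ ≤ ∫⁻ z, ENNReal.ofReal B * qM M (S.r z) ∂π₀ :=
          lintegral_mono fun z => mul_le_mul_left (ENNReal.ofReal_le_ofReal (hg.le z)) _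
      _ = ENNReal.ofReal B * ∫⁻ z, qM M (S.r z) ∂π₀ := lintegral_const_mul _ hq
      _ ≤ ENNReal.ofReal B * ENNReal.ofReal κ := by
          gcongr
          exact (inv_le S π₀ hπ₀ hπ₀inv hC hq).trans hM
      _ = _ := (ENNReal.ofReal_mul hB).symm
  have h3 : ∫⁻ z, ENNReal.ofReal (hh S g M z) ∂π₀ ≠ ∞ :=
    ((hh_nice S hg M).integrable π₀ measurable_id).lintegral_lt_top.ne
  have h2t : ∫⁻ z, ENNReal.ofReal (g z) * qM M (S.r z) ∂π₀ ≠ ∞ :=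
    ne_top_of_le_ne_top ENNReal.ofReal_ne_top h2
  rw [(hh_nice S hg M).integral_eq π₀, bb, h1, ENNReal.toReal_add h3 h2t, sub_add_cancel_left,
    abs_neg, abs_of_nonneg ENNReal.toReal_nonneg]
  exact ENNReal.toReal_le_of_le_ofReal (by positivity) h2

/-- The good event. -/
def Good {E : Type*} (g : E → ℝ) (b δ : ℝ) (n : ℕ) (ω : Traj E) : Prop :=
  (∀ i < n, ω.2 i ≠ ∞) ∧
    |∑ i ∈ Finset.range n, g (ω.1 i) * (ω.2 i).toReal - n * b| ≤ n * δ

lemma wlln {S : ChainSetting E} (π₀ : Measure E) (hπ₀ : IsProbabilityMeasure π₀)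
    (hπ₀inv : ∀ s : Set E, MeasurableSet s → ∫⁻ x, S.skel x s ∂π₀ = π₀ s)
    {B : ℝ} {g : E → ℝ} (hB : 0 ≤ B) (hg : NiceF B g) {δ₀ : ℝ} (hδ₀ : 0 < δ₀)
    {δ : ℝ} (hδ : 0 < δ) {η : ℝ} (hη : 0 < η) :
    ∃ N : ℕ, ∀ n ≥ N, ∀ x P, IsChainLaw S.r S.skel x P → δ₀ ≤ S.r x →
      P {ω | ¬ Good g (bb S π₀ g) δ n ω} ≤ ENNReal.ofReal η := by
  obtain ⟨C, hC0, hC⟩ := exists_C S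
  set δ' := δ / (1 + 2 * B) with hδ'
  have hδ'0 : 0 < δ' := by positivity
  set κ := δ' * min 1 (η / 2) with hκd
  have hκ : 0 < κ := by positivity
  have hκ1 : κ ≤ δ' := mul_le_of_le_one_right hδ'0.le (min_le_left _ _)
  have hκ2 : κ / δ' ≤ η / 2 := by
    rw [hκd, mul_div_cancel_left₀ _ hδ'0.ne']; exact min_le_right _ _
  obtain ⟨M, hM⟩ := exists_M S C hκ
  obtain ⟨K, hK0, hK⟩ := cheb (S := S) π₀ hπ₀ hπ₀inv hg M hδ'0
  have hm := m_close π₀ hπ₀ hπ₀inv hB hg hC M hκ hM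
  set m := ∫ y, hh S g M y ∂π₀ with hmd
  set b := bb S π₀ g with hb
  obtain ⟨N, hN⟩ := exists_nat_ge ((K + 1 / (δ₀ * δ')) / (η / 2))
  refine ⟨N + 1, fun n hn x P hP hx => ?_⟩
  have hn0 : 0 < n := by omega
  have hnpos : (0:ℝ) < n := by exact_mod_cast hn0
  have hnN : (K + 1 / (δ₀ * δ')) / n ≤ η / 2 := by
    have h1 : (N:ℝ) ≤ n := by exact_mod_cast (by omega : N ≤ n)
    rw [div_le_iff₀ hnpos]
    have := (div_le_iff₀ (by positivity : (0:ℝ) < η / 2)).mp (hN.trans h1)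
    linarith
  have htail : P {ω | ENNReal.ofReal (n * δ') ≤ ∑ i ∈ Finset.range n, (ω.2 i - M)}
      ≤ ENNReal.ofReal ((1 / δ₀ + n * κ) / (n * δ')) := by
    have hmeas : Measurable fun ω : Traj E => ∑ i ∈ Finset.range n, (ω.2 i - (M : ℝ≥0∞)) :=
      Finset.measurable_sum _ fun i _ => (meas_tau i).sub_const _
    have h1 := mul_meas_ge_le_lintegral₀ (μ := P) hmeas.aemeasurable (ENNReal.ofReal (n * δ'))
    have h2 : (ENNReal.ofReal (S.r x))⁻¹ + n * (ENNReal.ofReal C * ∫⁻ y, qM M (S.r y) ∂S.lam)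
        ≤ ENNReal.ofReal (1 / δ₀ + n * κ) := by
      rw [ENNReal.ofReal_add (by positivity) (by positivity), ENNReal.ofReal_mul hnpos.le,
        ENNReal.ofReal_natCast, one_div, ENNReal.ofReal_inv_of_pos hδ₀]
      gcongr
    have h3 := h1.trans ((tail_bound hP hC M n).trans h2)
    have hpos : 0 < (n:ℝ) * δ' := by positivity
    rw [ENNReal.ofReal_div_of_pos hpos, ENNReal.le_div_iff_mul_le
      (Or.inl (ENNReal.ofReal_pos.mpr hpos).ne') (Or.inl ENNReal.ofReal_ne_top), mul_comm]
    exact h3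
  have hch := hK x P hP n hn0
  have hsub : {ω | ¬ Good g b δ n ω} ⊆
      {ω | n * δ' < |∑ i ∈ Finset.range n, (VV g M i ω - m)|} ∪
      {ω | ENNReal.ofReal (n * δ') ≤ ∑ i ∈ Finset.range n, (ω.2 i - M)} := by
    intro ω hω
    by_contra hcon
    simp only [mem_union, mem_ofPred_eq, not_or, not_lt, not_le] at hcon
    obtain ⟨h1, h2⟩ := hcon
    refine hω ?_
    have hsumne : ∑ i ∈ Finset.range n, (ω.2 i - (M : ℝ≥0∞)) ≠ ∞ := h2.ne_top
    have hfin' : ∀ i ∈ Finset.range n, ω.2 i - (M : ℝ≥0∞) ≠ ∞ := by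
      intro i hi
      exact ((ENNReal.sum_lt_top.mp hsumne.lt_top) i hi).ne
    have hfin : ∀ i < n, ω.2 i ≠ ∞ := by
      intro i hi h
      exact hfin' i (Finset.mem_range.mpr hi) (by rw [h]; simp)
    refine ⟨hfin, ?_⟩
    have hdec : ∀ i ∈ Finset.range n, g (ω.1 i) * (ω.2 i).toReal
        = VV g M i ω + g (ω.1 i) * (ω.2 i - (M : ℝ≥0∞)).toReal := by
      intro i hi
      rw [VV, ← mul_add, ← ENNReal.toReal_add _ (hfin' i hi), min_add_tsub']
      exact ne_top_of_le_ne_top (ENNReal.natCast_ne_top M) (min_le_right _ _)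
    have hD0 : 0 ≤ ∑ i ∈ Finset.range n, g (ω.1 i) * (ω.2 i - (M : ℝ≥0∞)).toReal :=
      Finset.sum_nonneg fun i _ => mul_nonneg (hg.nn _) ENNReal.toReal_nonneg
    have hD1 : ∑ i ∈ Finset.range n, g (ω.1 i) * (ω.2 i - (M : ℝ≥0∞)).toReal ≤ B * (n * δ') := by
      calc _ ≤ ∑ i ∈ Finset.range n, B * (ω.2 i - (M : ℝ≥0∞)).toReal :=
            Finset.sum_le_sum fun i _ => mul_le_mul_of_nonneg_right (hg.le _) ENNReal.toReal_nonneg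
        _ = B * (∑ i ∈ Finset.range n, (ω.2 i - (M : ℝ≥0∞))).toReal := by
            rw [← Finset.mul_sum, ENNReal.toReal_sum hfin']
        _ ≤ B * (n * δ') := by
            gcongr
            exact ENNReal.toReal_le_of_le_ofReal (by positivity) h2.le
    rw [Finset.sum_congr rfl hdec, Finset.sum_add_distrib]
    rw [Finset.sum_sub_distrib, Finset.sum_const, Finset.card_range, nsmul_eq_mul] at h1
    have hδe : δ = δ' + 2 * B * δ' := by rw [hδ']; field_simp
    rw [abs_le] at h1 hm ⊢
    have hBκ : B * κ ≤ B * δ' := mul_le_mul_of_nonneg_left hκ1 hB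
    have e1 : (n:ℝ) * (m - b) ≤ n * (B * δ') := mul_le_mul_of_nonneg_left (by linarith) hnpos.le
    have e2 : (n:ℝ) * (-(B * δ')) ≤ n * (m - b) := mul_le_mul_of_nonneg_left (by linarith) hnpos.le
    have e3 : 0 ≤ (n:ℝ) * (B * δ') := by positivity
    rw [hδe]
    constructor <;> nlinarith
  refine (measure_mono hsub).trans ((measure_union_le _ _).trans ((add_le_add hch htail).trans ?_))
  rw [← ENNReal.ofReal_add (by positivity) (by positivity)]
  refine ENNReal.ofReal_le_ofReal ?_
  have : K / n + (1 / δ₀ + n * κ) / (n * δ') = (K + 1 / (δ₀ * δ')) / n + κ / δ' := by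
    field_simp
    ring
  rw [this]; linarith

lemma A_facts (S : ChainSetting E) (π₀ : Measure E) (hπ₀ : IsProbabilityMeasure π₀)
    (hπ₀inv : ∀ s : Set E, MeasurableSet s → ∫⁻ x, S.skel x s ∂π₀ = π₀ s) :
    ∫⁻ x, (ENNReal.ofReal (S.r x))⁻¹ ∂π₀ ≠ 0 ∧ ∫⁻ x, (ENNReal.ofReal (S.r x))⁻¹ ∂π₀ ≠ ∞ := by
  have hmr : Measurable fun y => (ENNReal.ofReal (S.r y))⁻¹ :=
    S.r_cont.measurable.ennreal_ofReal.inv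
  constructor
  · rw [Ne, lintegral_eq_zero_iff hmr]
    intro h
    have : ∀ᵐ x ∂π₀, False := by
      filter_upwards [h] with x hx
      simp at hx
    simp at this
    exact IsProbabilityMeasure.ne_zero π₀ this
  · obtain ⟨C, hC0, hC⟩ := exists_C S
    exact ne_top_of_le_ne_top (ENNReal.mul_ne_top ENNReal.ofReal_ne_top S.inv_r_int)
      (inv_le S π₀ hπ₀ hπ₀inv hC hmr)

lemma bb_one (S : ChainSetting E) (π₀ : Measure E) :
    bb S π₀ (fun _ => 1) = (∫⁻ x, (ENNReal.ofReal (S.r x))⁻¹ ∂π₀).toReal := by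
  simp [bb]

lemma pi_eq (S : ChainSetting E) (π₀ : Measure E) (hπ₀ : IsProbabilityMeasure π₀)
    (hπ₀inv : ∀ s : Set E, MeasurableSet s → ∫⁻ x, S.skel x s ∂π₀ = π₀ s)
    (f : C(E, ℝ)) {c B : ℝ} (hg : NiceF B fun x => f x + c) :
    ∫ y, f y ∂S.piMeas π₀ = bb S π₀ (fun x => f x + c) / bb S π₀ (fun _ => 1) - c := by
  obtain ⟨hA0, hA1⟩ := A_facts S π₀ hπ₀ hπ₀inv
  have hmr : Measurable fun y => (ENNReal.ofReal (S.r y))⁻¹ :=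
    S.r_cont.measurable.ennreal_ofReal.inv
  have hprob : IsProbabilityMeasure (S.piMeas π₀) := by
    constructor
    rw [ChainSetting.piMeas, Measure.smul_apply, withDensity_apply _ MeasurableSet.univ,
      Measure.restrict_univ, smul_eq_mul, ENNReal.inv_mul_cancel hA0 hA1]
  have h1 : ∫ y, (f y + c) ∂S.piMeas π₀
      = bb S π₀ (fun x => f x + c) / bb S π₀ (fun _ => 1) := by
    rw [hg.integral_eq, bb_one, bb, ChainSetting.piMeas, lintegral_smul_measure,
      lintegral_withDensity_eq_lintegral_mul _ hmr hg.meas.ennreal_ofReal, smul_eq_mul,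
      ENNReal.toReal_mul, ENNReal.toReal_inv, div_eq_inv_mul]
    congr 2
    exact lintegral_congr fun z => mul_comm _ _
  have hfi : Integrable (fun y => f y) (S.piMeas π₀) := by
    refine Integrable.of_bound f.continuous.measurable.aestronglyMeasurable ‖f‖
      (ae_of_all _ fun y => f.norm_coe_le_norm y)
  rw [← h1, integral_add hfi (integrable_const c)]
  simp

lemma unif_lln (S : ChainSetting E) (π₀ : Measure E) (hπ₀ : IsProbabilityMeasure π₀)
    (hπ₀inv : ∀ s : Set E, MeasurableSet s → ∫⁻ x, S.skel x s ∂π₀ = π₀ s)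
    (f : C(E, ℝ)) {δ₀ : ℝ} (hδ₀ : 0 < δ₀) {ε : ℝ} (hε : 0 < ε) {η : ℝ} (hη : 0 < η) :
    ∃ T₀ : ℝ, ∀ T ≥ T₀, ∀ x P, IsChainLaw S.r S.skel x P → δ₀ ≤ S.r x →
      P {ω : Traj E | ε <
            |(1 / T) * (∫ t in Set.Ioc (0 : ℝ) T, f (Traj.pos t ω)) - ∫ y, f y ∂S.piMeas π₀|}
        ≤ ENNReal.ofReal η := by
  obtain ⟨hA0, hA1⟩ := A_facts S π₀ hπ₀ hπ₀inv
  set c := ‖f‖ with hc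
  have hc0 : 0 ≤ c := norm_nonneg f
  have hfb : ∀ x, |f x| ≤ c := fun x => f.norm_coe_le_norm x
  have hg : NiceF (2 * c) fun x => f x + c :=
    ⟨f.continuous.measurable.add_const c, fun x => by linarith [(abs_le.mp (hfb x)).1],
      fun x => by linarith [(abs_le.mp (hfb x)).2]⟩
  have h1 : NiceF (1:ℝ) (fun _ : E => (1:ℝ)) :=
    ⟨measurable_const, fun _ => zero_le_one, fun _ => le_rfl⟩
  rw [pi_eq S π₀ hπ₀ hπ₀inv f hg]
  set a := bb S π₀ (fun _ => 1) with ha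
  set b := bb S π₀ (fun x => f x + c) with hb
  have ha0 : 0 < a := by rw [ha, bb_one]; exact ENNReal.toReal_pos hA0 hA1
  have hb0 : 0 ≤ b := ENNReal.toReal_nonneg
  set δ := ε * a / (2 * (2 * c + 1)) with hδd
  have hδ : 0 < δ := by positivity
  obtain ⟨N1, hN1⟩ := wlln (S := S) π₀ hπ₀ hπ₀inv zero_le_one h1 hδ₀ hδ (half_pos hη)
  obtain ⟨N2, hN2⟩ := wlln (S := S) π₀ hπ₀ hπ₀inv (by positivity) hg hδ₀ hδ (half_pos hη)
  refine ⟨max 1 (max (a * (N1 + N2)) (2 * (2 * c * a + b) / ε)), fun T hT x P hP hx => ?_⟩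
  have hT1 : 1 ≤ T := (le_max_left _ _).trans hT
  have hT2 : a * (N1 + N2) ≤ T := (le_max_left _ _).trans ((le_max_right _ _).trans hT)
  have hT3 : 2 * (2 * c * a + b) / ε ≤ T := (le_max_right _ _).trans ((le_max_right _ _).trans hT)
  have hTpos : 0 < T := by linarith
  set n := ⌊T / a⌋₊ with hn
  have hnN : N1 + N2 ≤ n := by
    refine Nat.le_floor ?_
    rw [le_div_iff₀ ha0]; push_cast; linarith
  have hn1 : (n:ℝ) * a ≤ T := by
    have := Nat.floor_le (by positivity : 0 ≤ T / a)
    rwa [le_div_iff₀ ha0] at this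
  have hn2 : T ≤ n * a + a := by
    have := (Nat.lt_floor_add_one (T / a)).le
    rw [div_le_iff₀ ha0] at this
    linarith
  have hsub : {ω : Traj E | ε <
      |(1 / T) * (∫ t in Set.Ioc (0 : ℝ) T, f (Traj.pos t ω)) - (b / a - c)|} ⊆
      {ω | ¬ Good (fun _ => (1:ℝ)) a δ n ω} ∪ {ω | ¬ Good (fun x => f x + c) b δ n ω} := by
    intro ω hω
    by_contra hcon
    simp only [mem_union, mem_ofPred_eq, not_or, not_not] at hcon
    obtain ⟨⟨hfin, g1⟩, ⟨-, g2⟩⟩ := hcon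
    have hω : ε < |(1 / T) * (∫ t in Set.Ioc (0 : ℝ) T, f (Traj.pos t ω)) - (b / a - c)| := hω
    refine absurd hω (not_lt.mpr ?_)
    simp only [one_mul] at g1
    have hdet := det_lemma ω (fun x => f x + c) (2 * c)
      (fun x => by rw [abs_of_nonneg (hg.nn x)]; exact hg.le x) n hfin T hTpos.le
    have hint : IntegrableOn (fun t : ℝ => f (Traj.pos t ω)) (Set.Ioc 0 T) := by
      have hmeas : Measurable fun t : ℝ => f (Traj.pos t ω) :=
        (measurable_from_top (f := fun k : ℕ => f (ω.1 k))).comp (measurable_idx ω)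
      exact Integrable.of_bound hmeas.aestronglyMeasurable c (ae_of_all _ fun t => hfb _)
    have hI : ∫ t in Set.Ioc (0 : ℝ) T, (f (Traj.pos t ω) + c)
        = (∫ t in Set.Ioc (0 : ℝ) T, f (Traj.pos t ω)) + T * c := by
      rw [integral_add hint (integrable_const c)]
      simp [hTpos.le]
    rw [hI] at hdet
    set A := ∫ t in Set.Ioc (0 : ℝ) T, f (Traj.pos t ω)
    set R := ∑ i ∈ Finset.range n, (f (ω.1 i) + c) * (ω.2 i).toReal
    set s := ∑ i ∈ Finset.range n, (ω.2 i).toReal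
    have hTs : |T - s| ≤ a + n * δ := by
      rw [abs_le] at g1 ⊢
      constructor <;> linarith
    have hq : |A + T * c - R| ≤ 2 * c * (a + n * δ) :=
      hdet.trans (mul_le_mul_of_nonneg_left hTs (by positivity))
    have hba : 0 ≤ b / a := by positivity
    have hnb1 : (n:ℝ) * b ≤ T * (b / a) := by
      have := mul_le_mul_of_nonneg_right hn1 hba
      have e : (n:ℝ) * a * (b / a) = n * b := by field_simp
      linarith
    have hnb2 : T * (b / a) ≤ n * b + b := by
      have := mul_le_mul_of_nonneg_right hn2 hba
      have e : ((n:ℝ) * a + a) * (b / a) = n * b + b := by field_simp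
      linarith
    have hnδ : (2 * c + 1) * (n * δ) ≤ ε * T / 2 := by
      have e : (2 * c + 1) * (n * δ) = ε / 2 * (n * a) := by rw [hδd]; field_simp
      rw [e]
      have := mul_le_mul_of_nonneg_left hn1 (half_pos hε).le
      linarith
    have hT4 : 2 * c * a + b ≤ ε * T / 2 := by
      rw [div_le_iff₀ hε] at hT3; linarith
    have hfinal : |A + T * c - T * (b / a)| ≤ ε * T := by
      rw [abs_le] at hq g2 ⊢
      constructor <;> linarith
    have e : 1 / T * A - (b / a - c) = (A + T * c - T * (b / a)) / T := by
      field_simp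
      ring
    rw [e, abs_div, abs_of_pos hTpos, div_le_iff₀ hTpos]
    exact hfinal
  refine (measure_mono hsub).trans ((measure_union_le _ _).trans
    ((add_le_add (hN1 n (by omega) x P hP hx) (hN2 n (by omega) x P hP hx)).trans ?_))
  rw [← ENNReal.ofReal_add (by positivity) (by positivity), add_halves]

/-- **Theorem 2.2** (law of large numbers for the empirical measure). For every `f ∈ C(E)`
and every `x ∈ E \ E₀`, the time average `(1/T)∫₀^T f(X_t) dt` converges in `P_x`-probability
to `π(f)` as `T → ∞`; moreover the convergence is uniform over `x` in any compact subset of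
`E \ E₀`. -/
theorem empirical_measure_lln (S : ChainSetting E)
    (P : E → Measure (Traj E)) (hP : ∀ x, IsChainLaw S.r S.skel x (P x))
    (π₀ : Measure E) (hπ₀ : IsProbabilityMeasure π₀)
    (hπ₀inv : ∀ s : Set E, MeasurableSet s → ∫⁻ x, S.skel x s ∂π₀ = π₀ s)
    (f : C(E, ℝ)) :
    (∀ x, x ∉ S.E0 → ∀ ε > (0 : ℝ),
      Tendsto (fun T : ℝ =>
          P x {ω : Traj E | ε <
            |(1 / T) * (∫ t in Set.Ioc (0 : ℝ) T, f (Traj.pos t ω)) - ∫ y, f y ∂S.piMeas π₀|})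
        atTop (𝓝 (0 : ℝ≥0∞))) ∧
    (∀ K : Set E, IsCompact K → K ⊆ S.E0ᶜ → ∀ ε > (0 : ℝ),
      Tendsto (fun T : ℝ =>
          ⨆ x ∈ K, P x {ω : Traj E | ε <
            |(1 / T) * (∫ t in Set.Ioc (0 : ℝ) T, f (Traj.pos t ω)) - ∫ y, f y ∂S.piMeas π₀|})
        atTop (𝓝 (0 : ℝ≥0∞))) := by
  have main : ∀ K : Set E, IsCompact K → K ⊆ S.E0ᶜ → ∀ ε > (0 : ℝ),
      Tendsto (fun T : ℝ =>
          ⨆ x ∈ K, P x {ω : Traj E | ε <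
            |(1 / T) * (∫ t in Set.Ioc (0 : ℝ) T, f (Traj.pos t ω)) - ∫ y, f y ∂S.piMeas π₀|})
        atTop (𝓝 (0 : ℝ≥0∞)) := by
    intro K hK hK0 ε hε
    obtain ⟨δ₀, hδ₀, hKr⟩ : ∃ δ₀ : ℝ, 0 < δ₀ ∧ ∀ x ∈ K, δ₀ ≤ S.r x := by
      rcases K.eq_empty_or_nonempty with rfl | hne
      · exact ⟨1, one_pos, by simp⟩
      · obtain ⟨z, hzK, hz⟩ := hK.exists_isMinOn hne S.r_cont.continuousOn
        exact ⟨S.r z, lt_of_le_of_ne (S.r_nonneg z) (Ne.symm (hK0 hzK)), fun x hx => hz hx⟩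
    refine ENNReal.tendsto_nhds_zero.mpr fun η hη => ?_
    obtain ⟨η', hη', hη'le⟩ : ∃ η' : ℝ, 0 < η' ∧ ENNReal.ofReal η' ≤ η := by
      rcases eq_or_ne η ∞ with rfl | hne
      · exact ⟨1, one_pos, le_top⟩
      · exact ⟨η.toReal, ENNReal.toReal_pos hη.ne' hne, ENNReal.ofReal_toReal_le⟩
    obtain ⟨T₀, hT₀⟩ := unif_lln S π₀ hπ₀ hπ₀inv f hδ₀ hε hη'
    filter_upwards [eventually_ge_atTop T₀] with T hT
    exact iSup₂_le fun x hx => (hT₀ T hT x (P x) (hP x) (hKr x hx)).trans hη'le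
  refine ⟨fun x hx ε hε => ?_, main⟩
  have := main {x} isCompact_singleton (by simpa using hx) ε hε
  simpa using this

end
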